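/- Fix κ > 0 and an integer m ≥ 3. There exist ε₀ > 0, ε₁ > 0 and an integer N, all depending only on I, the μ_i, the a_i, β, κ and m (not on n, a, x, k or ξ), such that for all n ≥ N, all a ≥ 1, all k ∈ {1,…,I}, all x ∈ ℝ^I with |x| ≤ κ √n (log n)^m, and all ξ ∈ ℝ^I: ε₀ n |ξ|² ≤ (1/2) ∑_{i=1}^I (λ_i^n + μ_i(ν_i n + x_i)) ξ_i² − (1/2) f_a(∑_{j=1}^I x_j) ξ_k² ≤ ε₁ n |ξ|². -/

import Mathlib

/-!
The quadratic form is diagonal. Since `μ_i ν_i = a_i / S` with `S = ∑ a_j / μ_j`, its `i`-th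
coefficient is half of `a_i (ρ + n) / S + μ_i x_i`, where `ρ = S λ^n`, minus half of
`f_a (∑ x_j)` when `i = k`. As `f_a y ≤ |y| + 1`, all the terms involving `x` are
at most `C * κ √n (log n)^m + 1 = o(n)` (`eventually_Rad_le`). The lower bound then needs only
`ρ ≥ 0`: the term `a_i n / S` dominates. For the upper bound, `f_a ≥ 0`, and the heavy-traffic
relation `n = ρ + β √ρ` gives `ρ ≤ 2 n + β²`.
-/

open Finset Metric Set

noncomputable section

namespace HW

variable {I : ℕ}

/-- `ℝ^I` with the Euclidean norm. -/
abbrev Euc (I : ℕ) := EuclideanSpace ℝ (Fin I)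

/-- First partial derivative `∂_i φ (x)`. -/
noncomputable def pd1 (φ : Euc I → ℝ) (i : Fin I) (x : Euc I) : ℝ :=
  fderiv ℝ φ x (EuclideanSpace.single i 1)

/-- Second partial derivative `∂²_{ii} φ (x)`. -/
noncomputable def pd2 (φ : Euc I → ℝ) (i : Fin I) (x : Euc I) : ℝ :=
  fderiv ℝ (pd1 φ i) x (EuclideanSpace.single i 1)

/-- The fluid fraction `ν_i = (a_i/μ_i) · μ̄` where `μ̄ = (∑ a_j/μ_j)⁻¹`. -/
noncomputable def nu (μ a : Fin I → ℝ) (i : Fin I) : ℝ :=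
  (a i / μ i) * (∑ j, a j / μ j)⁻¹

/-- The radius `κ √n (log n)^m` of the ball `B_κ^n`. -/
noncomputable def Rad (κ : ℝ) (m n : ℕ) : ℝ :=
  κ * Real.sqrt n * Real.log n ^ m

/-- The HJB equation at `x`, with a general "front" function `g` in place of `(e·x)^+`
(the true HJB equation uses `g y = max y 0`, the smoothed one uses `g = f_a`).
Here `lam = λ^n`, `l_i^n = a_i λ^n − μ_i ν_i n`. -/
def HJBgen (μ a c : Fin I → ℝ) (γ lam : ℝ) (n : ℕ) (g : ℝ → ℝ)
    (φ : Euc I → ℝ) (x : Euc I) : Prop :=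
  0 = -γ * φ x
    + g (∑ j, x j) * (⨅ i, (c i + μ i * pd1 φ i x - (1 / 2) * μ i * pd2 φ i x))
    + ∑ i, ((a i * lam - μ i * nu μ a i * n) - μ i * x i) * pd1 φ i x
    + (1 / 2) * ∑ i, (a i * lam + μ i * (nu μ a i * n + x i)) * pd2 φ i x

/-- A classical solution on `B = ball 0 R`: Lipschitz on the closed ball, `C²` on the open
ball, vanishing on the boundary sphere, and satisfying the (generalized) HJB equation on `B`. -/
def IsSolGen (μ a c : Fin I → ℝ) (γ lam : ℝ) (n : ℕ) (R : ℝ) (g : ℝ → ℝ)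
    (φ : Euc I → ℝ) : Prop :=
  (∃ K : NNReal, LipschitzOnWith K φ (closedBall 0 R)) ∧
  ContDiffOn ℝ 2 φ (ball 0 R) ∧
  (∀ x : Euc I, ‖x‖ = R → φ x = 0) ∧
  (∀ x ∈ ball (0 : Euc I) R, HJBgen μ a c γ lam n g φ x)

/-- α-Hölder continuity of the second derivative on every compact subset of `ball 0 R`. -/
def HolderSecond (α R : ℝ) (φ : Euc I → ℝ) : Prop :=
  ∀ K : Set (Euc I), K ⊆ ball 0 R → IsCompact K →
    ∃ C : ℝ, ∀ x ∈ K, ∀ y ∈ K,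
      ‖fderiv ℝ (fderiv ℝ φ) x - fderiv ℝ (fderiv ℝ φ) y‖ ≤ C * ‖x - y‖ ^ α

/-- The smoothing `f_a` of the positive-part function. -/
noncomputable def fa (a y : ℝ) : ℝ :=
  if 1 / (4 * a) ≤ y then y
  else if -(1 / (4 * a)) ≤ y then a * y ^ 2 + y / 2 + 1 / (16 * a)
  else 0

theorem fa_nonneg {a : ℝ} (ha : 1 ≤ a) (y : ℝ) : 0 ≤ fa a y := by
  have ha0 : 0 < a := by linarith
  unfold fa
  split_ifs with h1 h2
  · exact le_trans (by positivity) h1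
  · have : a * y ^ 2 + y / 2 + 1 / (16 * a) = a * (y + 1 / (4 * a)) ^ 2 := by
      field_simp
      ring
    rw [this]
    positivity
  · exact le_rfl

theorem fa_le {a : ℝ} (ha : 1 ≤ a) (y : ℝ) : fa a y ≤ |y| + 1 := by
  have ha0 : 0 < a := by linarith
  have hy := le_abs_self y
  have hy0 := abs_nonneg y
  unfold fa
  split_ifs with h1 h2
  · linarith
  · have hle : |y| ≤ 1 / (4 * a) := abs_le.2 ⟨h2, le_of_not_ge h1⟩
    -- on the quadratic piece `a * |y| ≤ 1 / 4`, so `a * y ^ 2 ≤ |y| / 4`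
    have h3 : a * |y| ≤ 1 / 4 := by
      calc a * |y| ≤ a * (1 / (4 * a)) := by gcongr
        _ = 1 / 4 := by field_simp
    have h4 : a * y ^ 2 ≤ |y| / 4 := by
      rw [← sq_abs y]
      nlinarith
    have h5 : 1 / (16 * a) ≤ 1 := by
      rw [div_le_one (by positivity)]
      linarith
    linarith
  · linarith

/-- `κ √n (log n)^m = o(n)`, with an additive constant absorbed. -/
theorem eventually_Rad_le (κ : ℝ) (m : ℕ) (C η : ℝ) (hη : 0 < η) :
    ∀ᶠ n : ℕ in Filter.atTop, C * Rad κ m n + 1 ≤ η * n := by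
  have h1 : (fun x : ℝ => Real.log x ^ m) =o[Filter.atTop] fun x : ℝ => x ^ (1 / 2 : ℝ) := by
    simpa using isLittleO_log_rpow_rpow_atTop (m : ℝ) (by norm_num : (0 : ℝ) < 1 / 2)
  have h1' := (h1.comp_tendsto (tendsto_natCast_atTop_atTop (R := ℝ))).def
    (c := η / (2 * (|C * κ| + 1))) (by positivity)
  have h2 : ∀ᶠ n : ℕ in Filter.atTop, 2 / η ≤ (n : ℝ) :=
    tendsto_natCast_atTop_atTop.eventually_ge_atTop _
  filter_upwards [h1', h2] with n hn hn2
  simp only [Function.comp, ← Real.sqrt_eq_rpow, Real.norm_eq_abs,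
    abs_of_nonneg (Real.sqrt_nonneg _)] at hn
  have hs : Real.sqrt n * Real.sqrt n = n := Real.mul_self_sqrt (Nat.cast_nonneg n)
  rw [div_le_iff₀ hη] at hn2
  have h3 : C * Rad κ m n ≤ η / 2 * n := by
    calc C * Rad κ m n = (C * κ) * (Real.sqrt n * Real.log n ^ m) := by unfold Rad; ring
      _ ≤ |(C * κ) * (Real.sqrt n * Real.log n ^ m)| := le_abs_self _
      _ = |C * κ| * (Real.sqrt n * |Real.log n ^ m|) := by
        rw [abs_mul, abs_mul (Real.sqrt n), abs_of_nonneg (Real.sqrt_nonneg _)]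
      _ ≤ (|C * κ| + 1) * (Real.sqrt n * (η / (2 * (|C * κ| + 1)) * Real.sqrt n)) := by
        gcongr
        linarith
      _ = η / 2 * (Real.sqrt n * Real.sqrt n) := by field_simp
      _ = η / 2 * n := by rw [hs]
  linarith

/-- Uniform ellipticity of the second-order coefficients of the smoothed
HJB operator: there are `ε₀, ε₁ > 0` and `N`, depending only on the model parameters, `κ`
and `m`, such that for all `n ≥ N`, `a ≥ 1`, `k`, all `x` with `|x| ≤ κ√n (log n)^m` and all
`ξ ∈ ℝ^I`:
`ε₀ n |ξ|² ≤ ½ ∑ᵢ (λᵢⁿ + μᵢ(νᵢ n + xᵢ)) ξᵢ² − ½ f_a(∑ⱼ xⱼ) ξ_k² ≤ ε₁ n |ξ|²`. -/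
theorem stmt7
    (I : ℕ) (hI : 0 < I)
    (μ a : Fin I → ℝ) (β : ℝ)
    (hμ : ∀ i, 0 < μ i) (ha : ∀ i, 0 < a i) (hsum : ∑ i, a i = 1)
    (lam : ℕ → ℝ)
    (hlam : ∀ n : ℕ, 1 ≤ n → 0 < lam n ∧
      (n : ℝ) = lam n * (∑ i, a i / μ i)
        + β * Real.sqrt (lam n * (∑ i, a i / μ i)))
    (κ : ℝ) (hκ : 0 < κ) (m : ℕ) (hm : 3 ≤ m) :
    ∃ ε₀ ε₁ : ℝ, ∃ N : ℕ, 0 < ε₀ ∧ 0 < ε₁ ∧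
      ∀ n : ℕ, N ≤ n →
        ∀ aa : ℝ, 1 ≤ aa →
          ∀ k : Fin I, ∀ x : Euc I, ‖x‖ ≤ Rad κ m n →
            ∀ ξ : Fin I → ℝ,
              ε₀ * n * (∑ i, ξ i ^ 2) ≤
                  (1 / 2) * (∑ i, (a i * lam n + μ i * (nu μ a i * n + x i)) * ξ i ^ 2)
                    - (1 / 2) * fa aa (∑ j, x j) * ξ k ^ 2 ∧
                (1 / 2) * (∑ i, (a i * lam n + μ i * (nu μ a i * n + x i)) * ξ i ^ 2)
                    - (1 / 2) * fa aa (∑ j, x j) * ξ k ^ 2 ≤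
                  ε₁ * n * (∑ i, ξ i ^ 2) := by
  have hne : Nonempty (Fin I) := ⟨⟨0, hI⟩⟩
  set S : ℝ := ∑ i, a i / μ i with hS
  have hS0 : 0 < S := Finset.sum_pos (fun i _ => div_pos (ha i) (hμ i)) Finset.univ_nonempty
  obtain ⟨i₀, hi₀⟩ := Finite.exists_min a
  have hδ : 0 < a i₀ := ha i₀
  generalize a i₀ = δ at hi₀ hδ
  have ha1 : ∀ i, a i ≤ 1 := fun i => by
    rw [← hsum]
    exact Finset.single_le_sum (fun j _ => (ha j).le) (Finset.mem_univ i)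
  set M : ℝ := ∑ i, μ i
  have hM : ∀ i, μ i ≤ M := fun i =>
    Finset.single_le_sum (fun j _ => (hμ j).le) (Finset.mem_univ i)
  have hM0 : 0 ≤ M := Finset.sum_nonneg fun i _ => (hμ i).le
  obtain ⟨N, hN⟩ := Filter.eventually_atTop.1
    (eventually_Rad_le κ m (M + I) (δ / (2 * S)) (by positivity))
  refine ⟨δ / (4 * S), (3 + β ^ 2 + δ) / S, max N 1, by positivity, by positivity, ?_⟩
  intro n hn aa haa k x hx ξ
  have hn1 : 1 ≤ n := le_trans (le_max_right _ _) hn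
  have hR := hN n (le_trans (le_max_left _ _) hn)
  have hn1' : (1 : ℝ) ≤ n := by exact_mod_cast hn1
  obtain ⟨hl0, hl⟩ := hlam n hn1
  set R := Rad κ m n
  have hR0 : 0 ≤ R := (norm_nonneg x).trans hx
  have hI0 : (0 : ℝ) ≤ I := Nat.cast_nonneg I
  have hxi : ∀ i, |x i| ≤ R := fun i => by
    rw [← Real.norm_eq_abs]
    exact (PiLp.norm_apply_le x i).trans hx
  have hsumx : |∑ j, x j| ≤ I * R := by
    calc |∑ j, x j| ≤ ∑ j, |x j| := Finset.abs_sum_le_sum_abs _ _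
      _ ≤ ∑ _j : Fin I, R := Finset.sum_le_sum fun j _ => hxi j
      _ = I * R := by simp
  have hf0 := fa_nonneg haa (∑ j, x j)
  have hf1 : fa aa (∑ j, x j) ≤ I * R + 1 := (fa_le haa _).trans (by linarith)
  generalize fa aa (∑ j, x j) = F at hf0 hf1
  -- `n = ρ + β √ρ` and `-β √ρ ≤ (β² + ρ) / 2`
  have hρ : lam n * S ≤ 2 * n + β ^ 2 := by
    have h0 : 0 ≤ lam n * S := by positivity
    nlinarith [Real.sq_sqrt h0, sq_nonneg (β + Real.sqrt (lam n * S))]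
  have hμx : ∀ i, |μ i * x i| ≤ M * R := fun i => by
    rw [abs_mul, abs_of_pos (hμ i)]
    exact mul_le_mul (hM i) (hxi i) (abs_nonneg _) hM0
  have hcoef : ∀ i, a i * lam n + μ i * (nu μ a i * n + x i)
      = a i * (lam n * S + n) / S + μ i * x i := fun i => by
    have := (hμ i).ne'
    unfold nu
    rw [← hS]
    field_simp
    ring
  have hIR : 0 ≤ I * R := by positivity
  have hMR : 0 ≤ M * R := by positivity
  have hlow : ∀ i, δ / (2 * S) * n + F ≤ a i * lam n + μ i * (nu μ a i * n + x i) := fun i => by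
    rw [hcoef]
    have h1 : δ * n / S ≤ a i * (lam n * S + n) / S := by
      have h2 : (n : ℝ) ≤ lam n * S + n := by
        have : 0 ≤ lam n * S := by positivity
        linarith
      have := (ha i).le
      have := hi₀ i
      gcongr
    have h3 : δ * n / S = 2 * (δ / (2 * S) * n) := by field_simp
    have := (abs_le.1 (hμx i)).1
    linarith
  have hupp : ∀ i, a i * lam n + μ i * (nu μ a i * n + x i)
      ≤ 2 * ((3 + β ^ 2 + δ) / S * n) := fun i => by
    rw [hcoef]
    have h1 : a i * (lam n * S + n) / S ≤ (3 + β ^ 2) * n / S := by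
      have h0 : 0 ≤ lam n * S + n := by positivity
      have h2 : a i * (lam n * S + n) ≤ (3 + β ^ 2) * n := by
        nlinarith [ha1 i, sq_nonneg β]
      gcongr
    have h3 : (3 + β ^ 2 + δ) / S * n = (3 + β ^ 2) * n / S + 2 * (δ / (2 * S) * n) := by
      field_simp
    have h4 : 0 ≤ (3 + β ^ 2) * n / S := by positivity
    have := (abs_le.1 (hμx i)).2
    linarith
  have hk : ξ k ^ 2 ≤ ∑ i, ξ i ^ 2 :=
    Finset.single_le_sum (f := fun i => ξ i ^ 2) (fun j _ => sq_nonneg _) (Finset.mem_univ k)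
  have hsl : (δ / (2 * S) * n + F) * ∑ i, ξ i ^ 2
      ≤ ∑ i, (a i * lam n + μ i * (nu μ a i * n + x i)) * ξ i ^ 2 := by
    rw [Finset.mul_sum]
    exact Finset.sum_le_sum fun i _ => mul_le_mul_of_nonneg_right (hlow i) (sq_nonneg _)
  have hsu : ∑ i, (a i * lam n + μ i * (nu μ a i * n + x i)) * ξ i ^ 2
      ≤ 2 * ((3 + β ^ 2 + δ) / S * n) * ∑ i, ξ i ^ 2 := by
    rw [Finset.mul_sum]
    exact Finset.sum_le_sum fun i _ => mul_le_mul_of_nonneg_right (hupp i) (sq_nonneg _)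
  have hFk : F * ξ k ^ 2 ≤ F * ∑ i, ξ i ^ 2 := mul_le_mul_of_nonneg_left hk hf0
  have hFk0 : 0 ≤ F * ξ k ^ 2 := by positivity
  have h4 : δ / (4 * S) = δ / (2 * S) / 2 := by
    field_simp
    norm_num
  constructor
  · rw [h4]
    linarith
  · linarith

end HW
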